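/- arXiv:2411.03177 — 2 statements merged into one kernel-verified Lean document; each statement's English description precedes it below -/
import Mathlib

section
/- Let $\bar{\alpha}, \bar{\alpha}' \in (0,1]$ and let $s, s' > 0$. Then $\frac{1}{s}\sqrt{\frac{1-\bar{\alpha}}{\bar{\alpha}}} = \frac{1}{s'}\sqrt{\frac{1-\bar{\alpha}'}{\bar{\alpha}'}}$ if and only if $\bar{\alpha}' = \frac{s^2 \bar{\alpha}}{s'^2 + \bar{\alpha}(s^2 - s'^2)}$. -/
/-- Proposition 1 (noise schedule rescaling), as an equivalence:
for `ᾱ, ᾱ' ∈ (0,1]` and `s, s' > 0`, the per-patch uncertainty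
`σ/s = (1/s)·√((1-ᾱ)/ᾱ)` is preserved iff
`ᾱ' = s²ᾱ / (s'² + ᾱ(s² - s'²))`. -/
theorem noise_schedule_rescale_iff
    (abar abar' : ℝ) (habar : abar ∈ Set.Ioc (0 : ℝ) 1) (habar' : abar' ∈ Set.Ioc (0 : ℝ) 1)
    (s s' : ℝ) (hs : 0 < s) (hs' : 0 < s') :
    (1 / s) * Real.sqrt ((1 - abar) / abar) = (1 / s') * Real.sqrt ((1 - abar') / abar') ↔
      abar' = s ^ 2 * abar / (s' ^ 2 + abar * (s ^ 2 - s' ^ 2)) := by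
  obtain ⟨h0, h1⟩ := habar
  obtain ⟨h0', h1'⟩ := habar'
  have hD : 0 < s' ^ 2 + abar * (s ^ 2 - s' ^ 2) := by
    have e1 : 0 < abar * s ^ 2 := by positivity
    have e2 : 0 ≤ (1 - abar) * s' ^ 2 := mul_nonneg (by linarith) (by positivity)
    nlinarith
  have hx : 0 ≤ (1 - abar) / abar := div_nonneg (by linarith) h0.le
  have hy : 0 ≤ (1 - abar') / abar' := div_nonneg (by linarith) h0'.le
  rw [← sq_eq_sq₀ (by positivity) (by positivity), mul_pow, mul_pow, Real.sq_sqrt hx,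
    Real.sq_sqrt hy, eq_div_iff hD.ne', div_pow, div_pow, div_mul_div_comm, div_mul_div_comm,
    div_eq_div_iff (by positivity) (by positivity)]
  constructor <;> intro h <;> linarith
end

section
/- Let $\bar{\alpha} \in (0,1]$ and $s, s' > 0$, and define $\bar{\alpha}' = \frac{s^2 \bar{\alpha}}{s'^2 + \bar{\alpha}(s^2 - s'^2)}$. Then $\bar{\alpha}' \in (0,1]$, and the associated noise levels satisfy $\sigma' = \frac{s'}{s}\sigma$, where $\sigma = \sqrt{(1-\bar{\alpha})/\bar{\alpha}}$ and $\sigma' = \sqrt{(1-\bar{\alpha}')/\bar{\alpha}'}$. -/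
/-- The rescaling rule `ᾱ' = s²ᾱ / (s'² + ᾱ(s² - s'²))` is well defined
(maps `(0,1]` into `(0,1]`) and multiplies the noise level
`σ = √((1-ᾱ)/ᾱ)` exactly by `s'/s`. -/
theorem noise_schedule_rescale_wellDefined
    (abar : ℝ) (habar : abar ∈ Set.Ioc (0 : ℝ) 1)
    (s s' : ℝ) (hs : 0 < s) (hs' : 0 < s')
    (abar' : ℝ) (habar' : abar' = s ^ 2 * abar / (s' ^ 2 + abar * (s ^ 2 - s' ^ 2))) :
    abar' ∈ Set.Ioc (0 : ℝ) 1 ∧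
      Real.sqrt ((1 - abar') / abar') = (s' / s) * Real.sqrt ((1 - abar) / abar) := by
  obtain ⟨h0, h1⟩ := habar
  have hn : 0 < s ^ 2 * abar := by positivity
  have hk : 0 ≤ s' ^ 2 * (1 - abar) := mul_nonneg (by positivity) (by linarith)
  have hD : s' ^ 2 + abar * (s ^ 2 - s' ^ 2) = s ^ 2 * abar + s' ^ 2 * (1 - abar) := by ring
  rw [hD] at habar'
  have hd : 0 < s ^ 2 * abar + s' ^ 2 * (1 - abar) := by linarith
  subst habar'
  refine ⟨⟨div_pos hn hd, (div_le_one hd).2 (by linarith)⟩, ?_⟩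
  have key : (1 - s ^ 2 * abar / (s ^ 2 * abar + s' ^ 2 * (1 - abar))) /
      (s ^ 2 * abar / (s ^ 2 * abar + s' ^ 2 * (1 - abar)))
      = (s' / s) ^ 2 * ((1 - abar) / abar) := by
    have e : 1 - s ^ 2 * abar / (s ^ 2 * abar + s' ^ 2 * (1 - abar))
        = s' ^ 2 * (1 - abar) / (s ^ 2 * abar + s' ^ 2 * (1 - abar)) := by
      rw [eq_div_iff hd.ne', sub_mul, div_mul_cancel₀ _ hd.ne']
      ring
    rw [e, div_div_div_cancel_right₀ hd.ne', div_pow, div_mul_div_comm]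
  rw [key, Real.sqrt_mul (by positivity), Real.sqrt_sq (by positivity)]
end
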